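/- Let N, n be positive integers, let Z ⊆ {0,1}^N be finite, let f_1, …, f_n : Z → {0,1} be functions with respective extended learning graphs G_1, …, G_n, and let f = f_1 ∨ … ∨ f_n. Let k ≥ 1 and assume that for every x ∈ Z with f(x) = 1 there are at least k indices i with f_i(x) = 1. Then there exists an extended learning graph G for f such that: for every z ∈ Z with f(z) = 0, C^0(G, z) ≤ (n/k) · (1/n) Σ_{i=1}^n C^0(G_i, z) · C^1(G_i), and for every z ∈ Z with f(z) = 1, C^1(G, z) ≤ 1. -/

import Mathlib

/-- An *extended learning graph* for a function `f : Z → {0,1}` on a set of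
inputs `Z ⊆ {0,1}^N`.  It consists of a finite directed acyclic graph rooted at
`root` (acyclicity is forced by the labelling: along each edge the label grows
by exactly one index), a labelling `S` of the vertices by subsets of `[N]` with
`S root = ∅`, nonnegative weights `w z b e` (for each input `z`, bit `b` and
edge `e`) that depend on `z` only through its restriction to `S e.2` and that
satisfy the compatibility condition between negative and positive instances,
and, for every positive input `y`, a unit flow `p y` sourced at the root,
vanishing on edges of zero positive weight, whose sinks are labelled by
1-certificates for `f` on `y`. -/
structure ExtendedLearningGraph (N : ℕ) (Z : Finset (Fin N → Bool))
    (f : (Fin N → Bool) → Bool) where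
  /-- number of vertices; the vertex set is `Fin n`. -/
  n : ℕ
  /-- the set of (directed) edges -/
  E : Finset (Fin n × Fin n)
  /-- the root -/
  root : Fin n
  /-- the labelling of vertices by subsets of `[N]` -/
  S : Fin n → Finset (Fin N)
  S_root : S root = ∅
  /-- along each edge the label grows by exactly one new index (this also
  forces the graph to be acyclic) -/
  S_edge : ∀ e ∈ E, ∃ j ∉ S e.1, S e.2 = insert j (S e.1)
  /-- the graph is rooted at `root`: every vertex is reachable from it -/
  reach : ∀ v : Fin n, Relation.ReflTransGen (fun u v => (u, v) ∈ E) root v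
  /-- the weights `w z b e` -/
  w : (Fin N → Bool) → Bool → Fin n × Fin n → ℝ
  w_nonneg : ∀ z b e, 0 ≤ w z b e
  /-- `w z b e` depends on `z` only through the restriction of `z` to `S e.2` -/
  w_local : ∀ z z' b, ∀ e ∈ E, (∀ j ∈ S e.2, z j = z' j) → w z b e = w z' b e
  /-- compatibility: `w x 0 e = w y 1 e` whenever the negative instance `x` and
  the positive instance `y` agree on `S e.1` and differ on the loaded index -/
  w_compat : ∀ x ∈ Z, ∀ y ∈ Z, f x = false → f y = true → ∀ e ∈ E,
      (∀ j ∈ S e.1, x j = y j) →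
      (∃ j ∉ S e.1, S e.2 = insert j (S e.1) ∧ x j ≠ y j) →
      w x false e = w y true e
  /-- the flows `p y` for positive instances `y` -/
  p : (Fin N → Bool) → Fin n × Fin n → ℝ
  p_nonneg : ∀ y e, 0 ≤ p y e
  /-- `p y` is a unit flow: the net outflow from the root is `1` -/
  p_root : ∀ y ∈ Z, f y = true →
      (∑ e ∈ E.filter fun e => e.1 = root, p y e)
        - (∑ e ∈ E.filter fun e => e.2 = root, p y e) = 1
  /-- flow conservation at every vertex other than the root and the sinks of
  the flow (a sink being a vertex with no outgoing flow) -/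
  p_conserve : ∀ y ∈ Z, f y = true → ∀ v : Fin n, v ≠ root →
      (∑ e ∈ E.filter fun e => e.1 = v, p y e) ≠ 0 →
      (∑ e ∈ E.filter fun e => e.1 = v, p y e)
        = (∑ e ∈ E.filter fun e => e.2 = v, p y e)
  /-- every sink of the flow `p y` (a vertex with positive incoming flow and no
  outgoing flow) is labelled by a `1`-certificate for `f` on `y` -/
  p_sink_cert : ∀ y ∈ Z, f y = true → ∀ v : Fin n,
      (∑ e ∈ E.filter fun e => e.2 = v, p y e) ≠ 0 →
      (∑ e ∈ E.filter fun e => e.1 = v, p y e) = 0 →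
      ∀ z ∈ Z, (∀ j ∈ S v, z j = y j) → f z = true
  /-- the flow vanishes on edges with zero positive weight -/
  p_zero : ∀ y ∈ Z, f y = true → ∀ e ∈ E, w y true e = 0 → p y e = 0

namespace ExtendedLearningGraph

variable {N : ℕ} {Z : Finset (Fin N → Bool)} {f : (Fin N → Bool) → Bool}

/-- The negative complexity `C^0(G, x) = Σ_{e ∈ E} w_x^0(e)`. -/
noncomputable def negComplexity (G : ExtendedLearningGraph N Z f)
    (x : Fin N → Bool) : ℝ :=
  ∑ e ∈ G.E, G.w x false e

/-- The positive complexity `C^1(G, y) = Σ_{e ∈ E} p_y(e)² / w_y^1(e)` (with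
the convention that a term with `p_y(e) = 0` equals `0`; recall that in Lean
division by zero yields zero, and `p_y(e) ≠ 0` forces `w_y^1(e) ≠ 0`). -/
noncomputable def posComplexity (G : ExtendedLearningGraph N Z f)
    (y : Fin N → Bool) : ℝ :=
  ∑ e ∈ G.E, (G.p y e) ^ 2 / G.w y true e

end ExtendedLearningGraph

/-!
Glue the graphs `G i` at their roots, scale the weights of the `i`-th one by `C1 i / k`, and on a
positive instance `y` split the unit flow equally among the `m ≥ k` graphs with `f i y = 1`. Each of
these contributes at most `(1 / m) ^ 2 * (k / C1 i) * C1 i`, so the positive complexity is at most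
`k / m ≤ 1`.

The one obstacle is compatibility: an instance `y` may be positive for the disjunction while
`f i y = 0`, and then nothing relates the weights `w y 1` of `G i` to its negative weights. When
the values of `y` loaded by an edge do not extend to a positive instance of `f i`, the positive
weight is therefore replaced by the negative weight of `y` with the newly loaded bit flipped.
-/

/-- The graph part of an extended learning graph: a rooted graph whose vertices are labelled by
sets of queried indices. Unlike in `ExtendedLearningGraph`, vertices and edges are taken from
arbitrary types `V` and `T`, so that graphs can be glued without renumbering. -/
structure LearningSkeleton (κ V T : Type*) [DecidableEq κ] where
  src : T → V
  tgt : T → V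
  endpoints_injective : Function.Injective fun t => (src t, tgt t)
  root : V
  S : V → Finset κ
  S_root : S root = ∅
  S_edge : ∀ t, ∃ j ∉ S (src t), S (tgt t) = insert j (S (src t))
  reach : ∀ v, Relation.ReflTransGen (fun u v => ∃ t, src t = u ∧ tgt t = v) root v

/-- The inputs in `Z` on which `f` takes the value `b`: the negative instances for `b = 0` and the
positive ones for `b = 1`. -/
def instancesWithValue {κ : Type*} (Z : Finset (κ → Bool)) (f : (κ → Bool) → Bool) (b : Bool) :
    Set (κ → Bool) :=
  {z | z ∈ Z ∧ f z = b}

/-- `A` is a `1`-certificate for `f` on `y`, as a set of indices. -/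
def IsOneCertificate {κ : Type*} (Z : Finset (κ → Bool)) (f : (κ → Bool) → Bool)
    (y : κ → Bool) (A : Finset κ) : Prop :=
  ∀ z ∈ Z, (∀ j ∈ A, z j = y j) → f z = true

namespace LearningSkeleton

variable {κ V T : Type*} [DecidableEq κ]

theorem tgt_ne_root (D : LearningSkeleton κ V T) (t : T) : D.tgt t ≠ D.root := by
  intro h
  obtain ⟨j, -, hS⟩ := D.S_edge t
  rw [h, D.S_root] at hS
  exact Finset.insert_ne_empty _ _ hS.symm

section Flow

variable [DecidableEq V] [Fintype T]

/-- The total flow leaving a vertex. -/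
def outflow (D : LearningSkeleton κ V T) (p : T → ℝ) (v : V) : ℝ :=
  ∑ t with D.src t = v, p t

/-- The total flow entering a vertex. -/
def inflow (D : LearningSkeleton κ V T) (p : T → ℝ) (v : V) : ℝ :=
  ∑ t with D.tgt t = v, p t

/-- `p` is a unit flow from the root with all its sinks in `C`, where a sink is a vertex with
incoming but no outgoing flow. No edge enters the root, so its net outflow is its outflow. -/
structure IsUnitFlow (D : LearningSkeleton κ V T) (C : Set V) (p : T → ℝ) : Prop where
  outflow_root : D.outflow p D.root = 1
  outflow_eq_inflow : ∀ v ≠ D.root, D.outflow p v ≠ 0 → D.outflow p v = D.inflow p v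
  sink_mem : ∀ v, D.inflow p v ≠ 0 → D.outflow p v = 0 → v ∈ C

theorem IsUnitFlow.mono {D : LearningSkeleton κ V T} {C C' : Set V} {p : T → ℝ}
    (hp : D.IsUnitFlow C p) (hC : C ⊆ C') : D.IsUnitFlow C' p :=
  ⟨hp.outflow_root, hp.outflow_eq_inflow, fun v hin hout => hC (hp.sink_mem v hin hout)⟩

theorem inflow_root (D : LearningSkeleton κ V T) (p : T → ℝ) : D.inflow p D.root = 0 := by
  simp [inflow, D.tgt_ne_root]

theorem outflow_const_mul (D : LearningSkeleton κ V T) (c : ℝ) (p : T → ℝ) (v : V) :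
    D.outflow (fun t => c * p t) v = c * D.outflow p v :=
  (Finset.mul_sum ..).symm

theorem inflow_const_mul (D : LearningSkeleton κ V T) (c : ℝ) (p : T → ℝ) (v : V) :
    D.inflow (fun t => c * p t) v = c * D.inflow p v :=
  (Finset.mul_sum ..).symm

end Flow

section Weighting

/-- `x` and `y` are told apart by the query made along the edge `t`, and by no index before it. -/
def Separates (D : LearningSkeleton κ V T) (t : T) (x y : κ → Bool) : Prop :=
  (∀ j ∈ D.S (D.src t), x j = y j) ∧ ∃ j ∈ D.S (D.tgt t), x j ≠ y j

/-- `w` satisfies the conditions on the weights of an extended learning graph whose negative and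
positive instances are those in `X` and `Y`. -/
structure IsWeighting (D : LearningSkeleton κ V T) (X Y : Set (κ → Bool))
    (w : (κ → Bool) → Bool → T → ℝ) : Prop where
  nonneg : ∀ z b t, 0 ≤ w z b t
  dependsOn : ∀ b t, DependsOn (fun z => w z b t) (D.S (D.tgt t) : Set κ)
  compat : ∀ x ∈ X, ∀ y ∈ Y, ∀ t, D.Separates t x y → w x false t = w y true t

/-- The input `z` with all bits outside `A` flipped. When `A` is the set of indices loaded before an
edge, this flips the newly loaded bit; bits that are not loaded yet do not matter. -/
def flipOutside (A : Finset κ) (z : κ → Bool) : κ → Bool :=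
  fun j => if j ∈ A then z j else !z j

open Classical in
/-- The weights `w`, with the positive weights of `z` along `t` replaced by the negative weights of
`z` with its last bit flipped wherever the part of `z` seen by `t` extends to no member of `Y`. -/
noncomputable def completeWeight (D : LearningSkeleton κ V T) (Y : Set (κ → Bool))
    (w : (κ → Bool) → Bool → T → ℝ) : (κ → Bool) → Bool → T → ℝ
  | z, false, t => w z false t
  | z, true, t =>
    if ∃ y ∈ Y, ∀ j ∈ D.S (D.tgt t), y j = z j then w z true t
    else w (flipOutside (D.S (D.src t)) z) false t

variable {D : LearningSkeleton κ V T} {X Y : Set (κ → Bool)} {w : (κ → Bool) → Bool → T → ℝ}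
  {t : T} {x y y' z : κ → Bool}

theorem S_src_subset_S_tgt (D : LearningSkeleton κ V T) (t : T) :
    D.S (D.src t) ⊆ D.S (D.tgt t) := by
  obtain ⟨j, -, hS⟩ := D.S_edge t
  exact hS ▸ Finset.subset_insert j _

theorem Separates.congr_right (h : D.Separates t x y) (hy : ∀ j ∈ D.S (D.tgt t), y' j = y j) :
    D.Separates t x y' := by
  obtain ⟨hagree, j, hj, hne⟩ := h
  exact ⟨fun l hl => (hagree l hl).trans (hy l (D.S_src_subset_S_tgt t hl)).symm,
    j, hj, (hy j hj).symm ▸ hne⟩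

theorem separates_iff : D.Separates t x y ↔ (∀ j ∈ D.S (D.src t), x j = y j) ∧
    ∃ j ∉ D.S (D.src t), D.S (D.tgt t) = insert j (D.S (D.src t)) ∧ x j ≠ y j := by
  refine and_congr_right fun hagree => ⟨fun ⟨i, hi, hne⟩ => ?_, fun ⟨j, _, hS, hne⟩ => ?_⟩
  · obtain ⟨j, hj, hS⟩ := D.S_edge t
    obtain rfl : i = j := (Finset.mem_insert.1 (hS ▸ hi)).resolve_right fun hi' =>
      hne (hagree i hi')
    exact ⟨i, hj, hS, hne⟩
  · exact ⟨j, hS ▸ Finset.mem_insert_self j _, hne⟩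

theorem Separates.eq_flipOutside (h : D.Separates t x y) :
    ∀ j ∈ D.S (D.tgt t), x j = flipOutside (D.S (D.src t)) y j := by
  obtain ⟨hagree, j, hj, hS, hne⟩ := separates_iff.1 h
  rw [hS, Finset.forall_mem_insert]
  refine ⟨?_, fun i hi => ?_⟩
  · simpa only [flipOutside, if_neg hj] using Bool.eq_not_of_ne hne
  · simpa only [flipOutside, if_pos hi] using hagree i hi

@[simp]
theorem completeWeight_false : D.completeWeight Y w z false t = w z false t := rfl

theorem completeWeight_true_of_mem (hz : z ∈ Y) : D.completeWeight Y w z true t = w z true t :=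
  if_pos ⟨z, hz, fun _ _ => rfl⟩

namespace IsWeighting

theorem dependsOn_completeWeight_true (hw : D.IsWeighting X Y w) (t : T) :
    DependsOn (fun z => D.completeWeight Y w z true t) (D.S (D.tgt t) : Set κ) := by
  intro z z' h
  have hextends : (∃ y ∈ Y, ∀ j ∈ D.S (D.tgt t), y j = z j) ↔
      ∃ y ∈ Y, ∀ j ∈ D.S (D.tgt t), y j = z' j :=
    exists_congr fun y => and_congr_right fun _ => forall₂_congr fun j hj => by rw [h j hj]
  have hflip : ∀ j ∈ (D.S (D.tgt t) : Set κ),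
      flipOutside (D.S (D.src t)) z j = flipOutside (D.S (D.src t)) z' j := fun j hj => by
    simp only [flipOutside, h j hj]
  classical exact if_congr hextends (hw.dependsOn true t h) (hw.dependsOn false t hflip)

theorem completeWeight (hw : D.IsWeighting X Y w) :
    D.IsWeighting X Set.univ (D.completeWeight Y w) where
  nonneg z b t := by
    cases b
    · exact hw.nonneg z false t
    · simp only [LearningSkeleton.completeWeight]
      split_ifs <;> exact hw.nonneg _ _ t
  dependsOn b t := by
    cases b
    · exact hw.dependsOn false t
    · exact hw.dependsOn_completeWeight_true t
  compat x hx y _ t hxy := by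
    by_cases h : ∃ y' ∈ Y, ∀ j ∈ D.S (D.tgt t), y' j = y j
    · obtain ⟨y', hy', hagree⟩ := h
      calc w x false t = w y' true t := hw.compat x hx y' hy' t (hxy.congr_right hagree)
        _ = w y true t := hw.dependsOn true t hagree
        _ = D.completeWeight Y w y true t := (if_pos ⟨y', hy', hagree⟩).symm
    · exact (hw.dependsOn false t hxy.eq_flipOutside).trans (if_neg h).symm

theorem mono {X' Y' : Set (κ → Bool)} (hw : D.IsWeighting X Y w) (hX : X' ⊆ X) (hY : Y' ⊆ Y) :
    D.IsWeighting X' Y' w :=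
  ⟨hw.nonneg, hw.dependsOn, fun x hx y hy => hw.compat x (hX hx) y (hY hy)⟩

theorem const_mul {a : ℝ} (ha : 0 ≤ a) (hw : D.IsWeighting X Y w) :
    D.IsWeighting X Y fun z b t => a * w z b t where
  nonneg z b t := mul_nonneg ha (hw.nonneg z b t)
  dependsOn b t _ _ h := congrArg (a * ·) (hw.dependsOn b t h)
  compat x hx y hy t h := congrArg (a * ·) (hw.compat x hx y hy t h)

end IsWeighting

end Weighting

section Wedge

variable {ι : Type*} {V T : ι → Type*}

/-- The vertices of the graphs `D i`, with all the roots identified (to `none`). -/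
abbrev WedgeVertex (D : ∀ i, LearningSkeleton κ (V i) (T i)) : Type _ :=
  Option (Σ i, {v : V i // v ≠ (D i).root})

variable (D : ∀ i, LearningSkeleton κ (V i) (T i)) [∀ i, DecidableEq (V i)]

/-- The inclusion of the vertices of `D i` into those of the wedge. -/
def incl (i : ι) (v : V i) : WedgeVertex D :=
  if h : v = (D i).root then none else some ⟨i, v, h⟩

variable {D} {i j : ι} {v : V i} {u : V j}

theorem incl_of_ne_root (hv : v ≠ (D i).root) : incl D i v = some ⟨i, v, hv⟩ :=
  dif_neg hv

theorem incl_eq_none_iff : incl D i v = none ↔ v = (D i).root := by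
  simp [incl]

theorem incl_eq_incl_iff (hu : u ≠ (D j).root) :
    incl D i v = incl D j u ↔ (⟨i, v⟩ : Σ i, V i) = ⟨j, u⟩ := by
  refine ⟨fun h => ?_, fun h => by cases h; rfl⟩
  have hv : v ≠ (D i).root := fun hv => by
    rw [incl_of_ne_root hu, incl_eq_none_iff.2 hv] at h
    cases h
  rw [incl_of_ne_root hu, incl_of_ne_root hv] at h
  cases h
  rfl

theorem incl_injective (i : ι) : Function.Injective (incl D i) := by
  intro v u h
  by_cases hu : u = (D i).root
  · rw [incl_eq_none_iff.2 hu, incl_eq_none_iff] at h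
    exact h.trans hu.symm
  · exact sigma_mk_injective ((incl_eq_incl_iff hu).1 h)

/-- The label of a vertex of the wedge. -/
def wedgeLabel (v : WedgeVertex D) : Finset κ :=
  v.elim ∅ fun u => (D u.1).S u.2

@[simp]
theorem wedgeLabel_incl (i : ι) (v : V i) : wedgeLabel (incl D i v) = (D i).S v := by
  by_cases hv : v = (D i).root
  · rw [incl_eq_none_iff.2 hv, hv, (D i).S_root]
    rfl
  · rw [incl_of_ne_root hv]
    rfl

variable (D) in
/-- The wedge sum of labelled graphs: their disjoint union with all the roots identified. -/
def wedge : LearningSkeleton κ (WedgeVertex D) (Σ i, T i) where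
  src t := incl D t.1 ((D t.1).src t.2)
  tgt t := incl D t.1 ((D t.1).tgt t.2)
  endpoints_injective := by
    rintro ⟨i, s⟩ ⟨j, t⟩ h
    obtain ⟨hsrc, htgt⟩ := Prod.mk.inj h
    obtain rfl : i = j := congrArg Sigma.fst ((incl_eq_incl_iff ((D j).tgt_ne_root t)).1 htgt)
    exact congrArg (Sigma.mk i) <|
      (D i).endpoints_injective (Prod.ext (incl_injective i hsrc) (incl_injective i htgt))
  root := none
  S := wedgeLabel
  S_root := rfl
  S_edge t := by simpa only [wedgeLabel_incl] using (D t.1).S_edge t.2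
  reach := by
    rintro (_ | ⟨i, v, hv⟩)
    · exact .refl
    · rw [← incl_of_ne_root hv, ← incl_eq_none_iff.2 (rfl : (D i).root = _)]
      refine ((D i).reach v).lift (incl D i) ?_
      rintro _ _ ⟨t, rfl, rfl⟩
      exact ⟨⟨i, t⟩, rfl, rfl⟩

theorem wedge_separates_iff {i : ι} {t : T i} {x y : κ → Bool} :
    (wedge D).Separates ⟨i, t⟩ x y ↔ (D i).Separates t x y := by
  simp [Separates, wedge]

theorem IsWeighting.wedge {X Y : Set (κ → Bool)} {w : ∀ i, (κ → Bool) → Bool → T i → ℝ}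
    (hw : ∀ i, (D i).IsWeighting X Y (w i)) :
    (wedge D).IsWeighting X Y fun z b t => w t.1 z b t.2 where
  nonneg z b t := (hw t.1).nonneg z b t.2
  dependsOn b t := by
    simpa only [LearningSkeleton.wedge, wedgeLabel_incl] using (hw t.1).dependsOn b t.2
  compat x hx y hy t h := (hw t.1).compat x hx y hy t.2 (wedge_separates_iff.1 h)

variable [Fintype ι] [DecidableEq ι] [∀ i, Fintype (T i)]

theorem sum_incl_eq_incl (g : ∀ i, T i → V i) (q : (Σ i, T i) → ℝ) (hu : u ≠ (D j).root) :
    ∑ t with incl D t.1 (g t.1 t.2) = incl D j u, q t = ∑ t with g j t = u, q ⟨j, t⟩ := by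
  simp only [incl_eq_incl_iff hu, Finset.sum_filter, Fintype.sum_sigma]
  rw [Fintype.sum_eq_single j]
  · simp only [sigma_mk_injective.eq_iff]
  · intro i hij
    exact Finset.sum_eq_zero fun t _ => if_neg fun h => hij (congrArg Sigma.fst h)

theorem outflow_wedge_incl (q : (Σ i, T i) → ℝ) (hu : u ≠ (D j).root) :
    (wedge D).outflow q (incl D j u) = (D j).outflow (fun t => q ⟨j, t⟩) u :=
  sum_incl_eq_incl (fun i => (D i).src) q hu

theorem inflow_wedge_incl (q : (Σ i, T i) → ℝ) (hu : u ≠ (D j).root) :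
    (wedge D).inflow q (incl D j u) = (D j).inflow (fun t => q ⟨j, t⟩) u :=
  sum_incl_eq_incl (fun i => (D i).tgt) q hu

theorem outflow_wedge_root (q : (Σ i, T i) → ℝ) :
    (wedge D).outflow q (wedge D).root =
      ∑ i, (D i).outflow (fun t => q ⟨i, t⟩) (D i).root := by
  simp only [outflow, Finset.sum_filter, Fintype.sum_sigma]
  simp only [wedge, incl_eq_none_iff]

theorem IsUnitFlow.wedge {C : Set (WedgeVertex D)} {p : ∀ i, T i → ℝ} {c : ι → ℝ}
    (hc : ∑ i, c i = 1) (hp : ∀ i, c i ≠ 0 → (D i).IsUnitFlow (incl D i ⁻¹' C) (p i)) :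
    (wedge D).IsUnitFlow C fun t => c t.1 * p t.1 t.2 where
  outflow_root := by
    simp only [outflow_wedge_root, outflow_const_mul]
    rw [← hc]
    refine Finset.sum_congr rfl fun i _ => ?_
    by_cases hi : c i = 0
    · rw [hi, zero_mul]
    · rw [(hp i hi).outflow_root, mul_one]
  outflow_eq_inflow := by
    rintro (_ | ⟨i, v, hv⟩) hne
    · exact absurd rfl hne
    · simp only [← incl_of_ne_root hv, outflow_wedge_incl _ hv, inflow_wedge_incl _ hv,
        outflow_const_mul, inflow_const_mul]
      intro hout
      rw [(hp i (left_ne_zero_of_mul hout)).outflow_eq_inflow v hv (right_ne_zero_of_mul hout)]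
  sink_mem := by
    rintro (_ | ⟨i, v, hv⟩)
    · exact fun hin => absurd ((LearningSkeleton.wedge D).inflow_root _) hin
    · simp only [← incl_of_ne_root hv, outflow_wedge_incl _ hv, inflow_wedge_incl _ hv,
        outflow_const_mul, inflow_const_mul]
      intro hin hout
      have hi : c i ≠ 0 := left_ne_zero_of_mul hin
      exact (hp i hi).sink_mem v (right_ne_zero_of_mul hin) ((mul_eq_zero.1 hout).resolve_left hi)

end Wedge

section Realization

variable {N : ℕ} [Fintype V] {D : LearningSkeleton (Fin N) V T} {q : T → ℝ} {t : T}
  {v : Fin (Fintype.card V)}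

variable (D) in
/-- The edges of `D` as pairs of numbered vertices. -/
noncomputable def finEdge : T ↪ Fin (Fintype.card V) × Fin (Fintype.card V) where
  toFun t := (Fintype.equivFin V (D.src t), Fintype.equivFin V (D.tgt t))
  inj' := ((Fintype.equivFin V).injective.prodMap (Fintype.equivFin V).injective).comp
    D.endpoints_injective

variable (D) in
/-- A function on the edges of `D`, extended by zero to all pairs of numbered vertices. -/
noncomputable def extendEdge (q : T → ℝ) : Fin (Fintype.card V) × Fin (Fintype.card V) → ℝ :=
  Function.extend D.finEdge q fun _ => 0

@[simp]
theorem symm_finEdge_fst : (Fintype.equivFin V).symm (D.finEdge t).1 = D.src t :=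
  (Fintype.equivFin V).symm_apply_apply _

@[simp]
theorem symm_finEdge_snd : (Fintype.equivFin V).symm (D.finEdge t).2 = D.tgt t :=
  (Fintype.equivFin V).symm_apply_apply _

@[simp]
theorem extendEdge_finEdge : D.extendEdge q (D.finEdge t) = q t :=
  D.finEdge.injective.extend_apply ..

theorem extendEdge_nonneg (hq : ∀ t, 0 ≤ q t)
    (e : Fin (Fintype.card V) × Fin (Fintype.card V)) : 0 ≤ D.extendEdge q e := by
  by_cases he : ∃ t, D.finEdge t = e
  · obtain ⟨t, rfl⟩ := he
    exact (hq t).trans_eq extendEdge_finEdge.symm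
  · exact (Function.extend_apply' q (fun _ => 0) e he).ge

variable [Fintype T]

theorem sum_extendEdge_filter_fst [DecidableEq V] :
    ∑ e ∈ Finset.univ.map D.finEdge with e.1 = v, D.extendEdge q e =
      D.outflow q ((Fintype.equivFin V).symm v) := by
  simp only [outflow, Finset.sum_filter, Finset.sum_map, extendEdge_finEdge,
    ← (Fintype.equivFin V).symm.injective.eq_iff, symm_finEdge_fst]

theorem sum_extendEdge_filter_snd [DecidableEq V] :
    ∑ e ∈ Finset.univ.map D.finEdge with e.2 = v, D.extendEdge q e =
      D.inflow q ((Fintype.equivFin V).symm v) := by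
  simp only [inflow, Finset.sum_filter, Finset.sum_map, extendEdge_finEdge,
    ← (Fintype.equivFin V).symm.injective.eq_iff, symm_finEdge_snd]

theorem reach_finEdge (v : Fin (Fintype.card V)) :
    Relation.ReflTransGen (fun a b => (a, b) ∈ Finset.univ.map D.finEdge)
      (Fintype.equivFin V D.root) v := by
  rw [← (Fintype.equivFin V).apply_symm_apply v]
  refine (D.reach ((Fintype.equivFin V).symm v)).lift (Fintype.equivFin V) ?_
  rintro _ _ ⟨t, rfl, rfl⟩
  exact Finset.mem_map_of_mem D.finEdge (Finset.mem_univ t)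

variable [DecidableEq V] {Z : Finset (Fin N → Bool)} {f : (Fin N → Bool) → Bool}
  {w : (Fin N → Bool) → Bool → T → ℝ} {p : (Fin N → Bool) → T → ℝ}

/-- The extended learning graph obtained from `D`, weights `w` and flows `p` by numbering the
vertices of `D`. -/
noncomputable def toExtendedLearningGraph
    (hw : D.IsWeighting (instancesWithValue Z f false) (instancesWithValue Z f true) w)
    (hp_nonneg : ∀ y t, 0 ≤ p y t)
    (hp : ∀ y ∈ instancesWithValue Z f true,
      D.IsUnitFlow {v | IsOneCertificate Z f y (D.S v)} (p y))
    (hp_zero : ∀ y ∈ instancesWithValue Z f true, ∀ t, w y true t = 0 → p y t = 0) :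
    ExtendedLearningGraph N Z f where
  n := Fintype.card V
  E := Finset.univ.map D.finEdge
  root := Fintype.equivFin V D.root
  S v := D.S ((Fintype.equivFin V).symm v)
  S_root := by rw [Equiv.symm_apply_apply, D.S_root]
  S_edge := by simpa using D.S_edge
  reach := reach_finEdge
  w z b := D.extendEdge (w z b)
  w_nonneg z b := extendEdge_nonneg (hw.nonneg z b)
  w_local z z' b := by simpa using fun t h => hw.dependsOn b t h
  w_compat x hx y hy hfx hfy := by
    simp only [Finset.forall_mem_map, symm_finEdge_fst, symm_finEdge_snd, extendEdge_finEdge]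
    exact fun t _ hagree hload =>
      hw.compat x ⟨hx, hfx⟩ y ⟨hy, hfy⟩ t (separates_iff.2 ⟨hagree, hload⟩)
  p y := D.extendEdge (p y)
  p_nonneg y := extendEdge_nonneg (hp_nonneg y)
  p_root y hy hfy := by
    rw [sum_extendEdge_filter_fst, sum_extendEdge_filter_snd, Equiv.symm_apply_apply,
      (hp y ⟨hy, hfy⟩).outflow_root, D.inflow_root, sub_zero]
  p_conserve y hy hfy v hv := by
    rw [sum_extendEdge_filter_fst, sum_extendEdge_filter_snd]
    exact (hp y ⟨hy, hfy⟩).outflow_eq_inflow _ fun h => hv ((Equiv.symm_apply_eq _).1 h)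
  p_sink_cert y hy hfy v := by
    rw [sum_extendEdge_filter_fst, sum_extendEdge_filter_snd]
    exact (hp y ⟨hy, hfy⟩).sink_mem _
  p_zero y hy hfy := by simpa using hp_zero y ⟨hy, hfy⟩

variable {hw : D.IsWeighting (instancesWithValue Z f false) (instancesWithValue Z f true) w}
  {hp_nonneg : ∀ y t, 0 ≤ p y t}
  {hp : ∀ y ∈ instancesWithValue Z f true,
    D.IsUnitFlow {v | IsOneCertificate Z f y (D.S v)} (p y)}
  {hp_zero : ∀ y ∈ instancesWithValue Z f true, ∀ t, w y true t = 0 → p y t = 0}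

theorem negComplexity_toExtendedLearningGraph (x : Fin N → Bool) :
    (toExtendedLearningGraph hw hp_nonneg hp hp_zero).negComplexity x = ∑ t, w x false t := by
  simp [ExtendedLearningGraph.negComplexity, toExtendedLearningGraph]

theorem posComplexity_toExtendedLearningGraph (y : Fin N → Bool) :
    (toExtendedLearningGraph hw hp_nonneg hp hp_zero).posComplexity y =
      ∑ t, p y t ^ 2 / w y true t := by
  simp [ExtendedLearningGraph.posComplexity, toExtendedLearningGraph]

end Realization

end LearningSkeleton

namespace ExtendedLearningGraph

variable {N : ℕ} {Z : Finset (Fin N → Bool)} {f : (Fin N → Bool) → Bool} {y : Fin N → Bool}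

/-- The graph part of an extended learning graph. -/
def skeleton (G : ExtendedLearningGraph N Z f) : LearningSkeleton (Fin N) (Fin G.n) G.E where
  src e := e.1.1
  tgt e := e.1.2
  endpoints_injective := Subtype.val_injective
  root := G.root
  S := G.S
  S_root := G.S_root
  S_edge e := G.S_edge e e.2
  reach v := (G.reach v).lift id fun a b h => ⟨⟨(a, b), h⟩, rfl, rfl⟩

variable (G : ExtendedLearningGraph N Z f)

theorem isWeighting_skeleton :
    G.skeleton.IsWeighting (instancesWithValue Z f false) (instancesWithValue Z f true)
      fun z b e => G.w z b e where
  nonneg z b e := G.w_nonneg z b e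
  dependsOn b e z z' h := G.w_local z z' b e e.2 h
  compat x hx y hy e h := by
    obtain ⟨hagree, hload⟩ := LearningSkeleton.separates_iff.1 h
    exact G.w_compat x hx.1 y hy.1 hx.2 hy.2 e e.2 hagree hload

theorem outflow_skeleton (q : Fin G.n × Fin G.n → ℝ) (v : Fin G.n) :
    G.skeleton.outflow (fun e => q e) v = ∑ e ∈ G.E with e.1 = v, q e := by
  simp only [LearningSkeleton.outflow, Finset.sum_filter]
  exact Finset.sum_coe_sort G.E fun e => if e.1 = v then q e else 0

theorem inflow_skeleton (q : Fin G.n × Fin G.n → ℝ) (v : Fin G.n) :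
    G.skeleton.inflow (fun e => q e) v = ∑ e ∈ G.E with e.2 = v, q e := by
  simp only [LearningSkeleton.inflow, Finset.sum_filter]
  exact Finset.sum_coe_sort G.E fun e => if e.2 = v then q e else 0

theorem isUnitFlow_skeleton (hy : y ∈ instancesWithValue Z f true) :
    G.skeleton.IsUnitFlow {v | IsOneCertificate Z f y (G.S v)} fun e => G.p y e where
  outflow_root := by
    rw [← sub_zero (G.skeleton.outflow _ _), ← G.skeleton.inflow_root fun e => G.p y e,
      outflow_skeleton, inflow_skeleton]
    exact G.p_root y hy.1 hy.2
  outflow_eq_inflow v hv := by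
    rw [outflow_skeleton, inflow_skeleton]
    exact G.p_conserve y hy.1 hy.2 v hv
  sink_mem v := by
    rw [outflow_skeleton, inflow_skeleton]
    exact G.p_sink_cert y hy.1 hy.2 v

theorem posComplexity_pos (hy : y ∈ instancesWithValue Z f true) : 0 < G.posComplexity y := by
  have hout : G.skeleton.outflow (fun e => G.p y e) G.skeleton.root ≠ 0 := by
    rw [(G.isUnitFlow_skeleton hy).outflow_root]
    exact one_ne_zero
  obtain ⟨e, -, hpe⟩ := Finset.exists_ne_zero_of_sum_ne_zero hout
  have hwe : G.w y true e ≠ 0 := fun h => hpe (G.p_zero y hy.1 hy.2 e e.2 h)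
  exact Finset.sum_pos' (fun e _ => div_nonneg (sq_nonneg _) (G.w_nonneg y true e))
    ⟨e, e.2, div_pos (by positivity) ((G.w_nonneg y true e).lt_of_ne' hwe)⟩

section Disjunction

open LearningSkeleton

variable {ι : Type*} {f : ι → (Fin N → Bool) → Bool} {F : (Fin N → Bool) → Bool}
  (G : ∀ i, ExtendedLearningGraph N Z (f i)) {a c : ι → ℝ}

/-- The weights on the wedge of the graphs `G i`: those of `G i` are first completed, so that they
are compatible with instances on which `f i` is not `1`, and then scaled by `a i`. -/
noncomputable def wedgeWeight (a : ι → ℝ) (z : Fin N → Bool) (b : Bool) (t : Σ i, (G i).E) : ℝ :=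
  a t.1 * (G t.1).skeleton.completeWeight (instancesWithValue Z (f t.1) true)
    (fun z b e => (G t.1).w z b e) z b t.2

theorem isWeighting_wedgeWeight (hF : ∀ i, ∀ z ∈ Z, f i z = true → F z = true)
    (ha : ∀ i, 0 ≤ a i) :
    (wedge fun i => (G i).skeleton).IsWeighting (instancesWithValue Z F false)
      (instancesWithValue Z F true) (wedgeWeight G a) := by
  have hneg (i) : instancesWithValue Z F false ⊆ instancesWithValue Z (f i) false :=
    fun x hx => ⟨hx.1, Bool.eq_false_iff.2 fun h => Bool.eq_false_iff.1 hx.2 (hF i x hx.1 h)⟩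
  exact .wedge fun i =>
    ((G i).isWeighting_skeleton.completeWeight.mono (hneg i) (Set.subset_univ _)).const_mul (ha i)

theorem isUnitFlow_wedge [Fintype ι] [DecidableEq ι]
    (hF : ∀ i, ∀ z ∈ Z, f i z = true → F z = true) (hy : y ∈ Z) (hc : ∑ i, c i = 1)
    (hcf : ∀ i, c i ≠ 0 → f i y = true) :
    (wedge fun i => (G i).skeleton).IsUnitFlow
      {v | IsOneCertificate Z F y ((wedge fun i => (G i).skeleton).S v)}
      fun t => c t.1 * (G t.1).p y t.2 := by
  refine .wedge (D := fun i => (G i).skeleton) (p := fun i e => (G i).p y e) hc fun i hi =>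
    ((G i).isUnitFlow_skeleton ⟨hy, hcf i hi⟩).mono ?_
  intro v hv z hz h
  exact hF i z hz (hv z hz (by simpa only [wedge, wedgeLabel_incl, skeleton] using h))

theorem wedgeWeight_true_of_mem {i : ι} (hy : y ∈ instancesWithValue Z (f i) true)
    (e : (G i).E) : wedgeWeight G a y true ⟨i, e⟩ = a i * (G i).w y true e :=
  congrArg (a i * ·) (completeWeight_true_of_mem hy)

theorem sum_wedgeWeight_false [Fintype ι] (x : Fin N → Bool) :
    ∑ t, wedgeWeight G a x false t = ∑ i, a i * (G i).negComplexity x := by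
  simp only [wedgeWeight, completeWeight_false, Fintype.sum_sigma, ← Finset.mul_sum]
  exact Finset.sum_congr rfl fun i _ =>
    congrArg (a i * ·) (Finset.sum_coe_sort (G i).E ((G i).w x false))

theorem sum_sq_div_wedgeWeight_true [Fintype ι] (hy : y ∈ Z)
    (hcf : ∀ i, c i ≠ 0 → f i y = true) :
    ∑ t : Σ i, (G i).E, (c t.1 * (G t.1).p y t.2) ^ 2 / wedgeWeight G a y true t =
      ∑ i, c i ^ 2 / a i * (G i).posComplexity y := by
  rw [Fintype.sum_sigma]
  refine Finset.sum_congr rfl fun i _ => ?_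
  rcases eq_or_ne (c i) 0 with hi | hi
  · simp [hi]
  · simp only [wedgeWeight_true_of_mem G ⟨hy, hcf i hi⟩, mul_pow, mul_div_mul_comm,
      ← Finset.mul_sum]
    exact congrArg _ (Finset.sum_coe_sort (G i).E fun e => (G i).p y e ^ 2 / (G i).w y true e)

theorem exists_weighted_disjunction [Fintype ι]
    (hF : ∀ i, ∀ z ∈ Z, f i z = true → F z = true) (ha : ∀ i, 0 ≤ a i)
    {c : (Fin N → Bool) → ι → ℝ} (hc_nonneg : ∀ y i, 0 ≤ c y i)
    (hc_sum : ∀ y ∈ Z, F y = true → ∑ i, c y i = 1)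
    (hcf : ∀ y ∈ Z, ∀ i, c y i ≠ 0 → f i y = true) (hca : ∀ y ∈ Z, ∀ i, c y i ≠ 0 → a i ≠ 0) :
    ∃ H : ExtendedLearningGraph N Z F,
      (∀ x, H.negComplexity x = ∑ i, a i * (G i).negComplexity x) ∧
      ∀ y ∈ Z, H.posComplexity y = ∑ i, c y i ^ 2 / a i * (G i).posComplexity y := by
  classical
  have hp_zero : ∀ y ∈ instancesWithValue Z F true, ∀ t,
      wedgeWeight G a y true t = 0 → c y t.1 * (G t.1).p y t.2 = 0 := by
    rintro y ⟨hy, -⟩ ⟨i, e⟩ hw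
    refine mul_eq_zero.2 (or_iff_not_imp_left.2 fun hi => ?_)
    have hfy := hcf y hy i hi
    rw [wedgeWeight_true_of_mem G ⟨hy, hfy⟩] at hw
    exact (G i).p_zero y hy hfy e e.2 ((mul_eq_zero.1 hw).resolve_left (hca y hy i hi))
  let H := toExtendedLearningGraph (isWeighting_wedgeWeight G hF ha)
    (fun y t => mul_nonneg (hc_nonneg y t.1) ((G t.1).p_nonneg y t.2))
    (fun y hy => isUnitFlow_wedge G hF hy.1 (hc_sum y hy.1 hy.2) (hcf y hy.1)) hp_zero
  refine ⟨H, fun x => ?_, fun y hy => ?_⟩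
  · exact (negComplexity_toExtendedLearningGraph x).trans (sum_wedgeWeight_false G x)
  · exact (posComplexity_toExtendedLearningGraph y).trans
      (sum_sq_div_wedgeWeight_true G hy (hcf y hy))

end Disjunction

end ExtendedLearningGraph

theorem stmt_1_general {N : ℕ} {ι : Type*} [Fintype ι] {Z : Finset (Fin N → Bool)}
    {f : ι → (Fin N → Bool) → Bool} {F : (Fin N → Bool) → Bool}
    (hF : ∀ i, ∀ z ∈ Z, f i z = true → F z = true)
    (G : ∀ i, ExtendedLearningGraph N Z (f i)) {k : ℕ} (hk : 1 ≤ k)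
    (hcount : ∀ y ∈ Z, F y = true → k ≤ (Finset.univ.filter fun i => f i y = true).card)
    {C1 : ι → ℝ} (hC1_nonneg : ∀ i, 0 ≤ C1 i)
    (hC1 : ∀ i, ∀ y ∈ Z, f i y = true → (G i).posComplexity y ≤ C1 i) :
    ∃ H : ExtendedLearningGraph N Z F,
      (∀ x, H.negComplexity x = (∑ i, (G i).negComplexity x * C1 i) / k) ∧
      ∀ y ∈ Z, F y = true → H.posComplexity y ≤ 1 := by
  have hk0 : (0 : ℝ) < k := Nat.cast_pos.2 hk
  let m (y : Fin N → Bool) : ℝ := (Finset.univ.filter fun i => f i y = true).card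
  have hkm : ∀ y ∈ Z, F y = true → k ≤ m y := fun y hy hFy => Nat.cast_le.2 (hcount y hy hFy)
  have hC1_pos : ∀ i, ∀ y ∈ Z, f i y = true → 0 < C1 i := fun i y hy hfy =>
    ((G i).posComplexity_pos ⟨hy, hfy⟩).trans_le (hC1 i y hy hfy)
  let c (y : Fin N → Bool) (i : ι) : ℝ := if f i y = true then (m y)⁻¹ else 0
  have hcf (y i) (h : c y i ≠ 0) : f i y = true := (ite_ne_right_iff.1 h).1
  have hc_sum : ∀ y ∈ Z, F y = true → ∑ i, c y i = 1 := fun y hy hFy => by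
    rw [← Finset.sum_filter, Finset.sum_const, nsmul_eq_mul]
    exact mul_inv_cancel₀ (hk0.trans_le (hkm y hy hFy)).ne'
  obtain ⟨H, hneg, hpos⟩ := ExtendedLearningGraph.exists_weighted_disjunction G hF
    (a := fun i => C1 i / k) (c := c) (fun i => div_nonneg (hC1_nonneg i) hk0.le)
    (fun y i => by positivity) hc_sum (fun y _ => hcf y)
    (fun y hy i hi => (div_pos (hC1_pos i y hy (hcf y i hi)) hk0).ne')
  refine ⟨H, fun x => ?_, fun y hy hFy => ?_⟩
  · rw [hneg, Finset.sum_div]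
    exact Finset.sum_congr rfl fun i _ => by ring
  · have hterm (i) : c y i ^ 2 / (C1 i / k) * (G i).posComplexity y ≤ k / m y * c y i := by
      by_cases hfy : f i y = true
      · have hC := hC1_pos i y hy hfy
        simp only [c, if_pos hfy]
        calc (m y)⁻¹ ^ 2 / (C1 i / k) * (G i).posComplexity y
            ≤ (m y)⁻¹ ^ 2 / (C1 i / k) * C1 i := by gcongr; exact hC1 i y hy hfy
          _ = k / m y * (m y)⁻¹ := by field_simp
      · simp [c, hfy]
    calc H.posComplexity y ≤ ∑ i, k / m y * c y i :=
          (hpos y hy).trans_le (Finset.sum_le_sum fun i _ => hterm i)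
      _ = k / m y := by rw [← Finset.mul_sum, hc_sum y hy hFy, mul_one]
      _ ≤ 1 := div_le_one_of_le₀ (hkm y hy hFy) (Nat.cast_nonneg _)

/-- **learning graph for OR.** Let `f₁, …, f_n : Z → {0,1}` have
extended learning graphs `G₁, …, G_n`, and let `f = f₁ ∨ … ∨ f_n`.  Assume that
for every `x ∈ Z` with `f(x) = 1` at least `k ≥ 1` of the indices `i` satisfy
`f_i(x) = 1`, and let `C1 i` be a nonnegative upper bound on the positive
complexity `C¹(G_i)` of `G_i`.  Then there is an extended learning graph `G`
for `f` such that `C⁰(G, z) ≤ (n/k) · (1/n) Σ_i C⁰(G_i, z)·C1 i` for every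
negative instance `z`, and `C¹(G, z) ≤ 1` for every positive instance `z`. -/
theorem stmt_1 (N n : ℕ) (hN : 0 < N) (hn : 0 < n)
    (Z : Finset (Fin N → Bool))
    (f : Fin n → (Fin N → Bool) → Bool)
    (G : ∀ i : Fin n, ExtendedLearningGraph N Z (f i))
    (k : ℕ) (hk : 1 ≤ k)
    (hcount : ∀ x ∈ Z, (∃ i, f i x = true) →
      k ≤ (Finset.univ.filter fun i : Fin n => f i x = true).card)
    (C1 : Fin n → ℝ) (hC1nonneg : ∀ i, 0 ≤ C1 i)
    (hC1 : ∀ i, ∀ y ∈ Z, f i y = true → (G i).posComplexity y ≤ C1 i) :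
    ∃ Gor : ExtendedLearningGraph N Z (fun z => decide (∃ i, f i z = true)),
      (∀ z ∈ Z, (¬ ∃ i, f i z = true) →
        Gor.negComplexity z ≤
          ((n : ℝ) / k) * ((1 / n) * ∑ i, (G i).negComplexity z * C1 i)) ∧
      (∀ z ∈ Z, (∃ i, f i z = true) → Gor.posComplexity z ≤ 1) := by
  obtain ⟨H, hneg, hpos⟩ := stmt_1_general (F := fun z => decide (∃ i, f i z = true))
    (fun i _ _ h => decide_eq_true ⟨i, h⟩) G hk (fun y hy h => hcount y hy (of_decide_eq_true h))
    hC1nonneg hC1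
  refine ⟨H, fun z _ _ => ?_, fun z hz h => hpos z hz (decide_eq_true h)⟩
  rw [hneg, ← mul_assoc, div_mul_div_cancel₀' (by positivity), div_mul_eq_mul_div, one_mul]
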